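/- Let G be a finite group and u a central element of G with u² = 1. For every virtual character χ of G over ℂ (i.e. a difference χ_V − χ_W of characters of two finite-dimensional complex representations of G) and every integer k ≥ 1, the function G → ℂ given by g ↦ χ(u^{k+1}·g^k) is again a virtual character of G. -/

import Mathlib

/-!
Write `Λⁱ` for the character of the `i`-th exterior power of a representation with character `χ`,
and `ψⁱ(g) = χ(gⁱ)`. Newton's identity `∑_{i ≤ k} (-1)ⁱ Λⁱ ψ^{k+1-i} = (-1)ᵏ (k+1) Λ^{k+1}` has
leading term `ψ^{k+1}`, so by induction every `ψᵏ` is an integral polynomial in the `Λⁱ`, hence a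
virtual character. The identity holds over any commutative ring: with `D(X) = det (1 - X A)`,
Jacobi's formula expresses the derivative of `D` through the adjugate of `1 - X A`, whose
coefficients follow from `adj(1 - X A) (1 - X A) = D`, and the coefficients of `D` are, up to sign,
the sums of principal minors, i.e. the traces of the exterior powers of `A`.

If `u` is a central involution of `G` acting on `V`, then `ker (u - 1)` is a subrepresentation on
which `u` acts as `1`, while `u` acts as `-1` on the quotient; so translating a character by `u`
gives the difference of the characters of these two representations, in any characteristic.
-/

open Finset Polynomial
open scoped CategoryTheory.MonoidalCategory

section NewtonIdentity

variable {R n : Type*} [CommRing R] [Fintype n] [DecidableEq n]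

theorem derivative_det_eq_sum_det_updateCol (M : Matrix n n R[X]) :
    derivative M.det = ∑ j, (M.updateCol j fun i ↦ derivative (M i j)).det := by
  simp only [Matrix.det_apply', derivative_sum, derivative_mul, derivative_intCast, zero_mul,
    zero_add, derivative_prod_finset, mul_sum]
  rw [sum_comm]
  refine sum_congr rfl fun j _ ↦ sum_congr rfl fun σ _ ↦ ?_
  rw [← prod_erase_mul _ _ (mem_univ j), Matrix.updateCol_self]
  congr 2
  exact prod_congr rfl fun i hi ↦ by rw [Matrix.updateCol_ne (ne_of_mem_erase hi)]

theorem derivative_det_eq_trace_adjugate_mul (M : Matrix n n R[X]) :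
    derivative M.det = (M.adjugate * M.map derivative).trace := by
  rw [derivative_det_eq_sum_det_updateCol, Matrix.trace]
  refine sum_congr rfl fun j _ ↦ ?_
  rw [← Matrix.cramer_apply, Matrix.cramer_eq_adjugate_mulVec]
  rfl

theorem coeff_matPolyEquiv_adjugate_one_sub_X_smul (A : Matrix n n R) (k : ℕ) :
    (matPolyEquiv (1 - (X : R[X]) • A.map C).adjugate).coeff k =
      ∑ p ∈ antidiagonal k, A.charpolyRev.coeff p.1 • A ^ p.2 := by
  set B := matPolyEquiv (1 - (X : R[X]) • A.map C).adjugate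
  have hB : B - X * (C A * B) = A.charpolyRev.map (algebraMap R (Matrix n n R)) := by
    rw [Matrix.charpolyRev, ← matPolyEquiv_smul_one, ← Matrix.mul_adjugate, map_mul, map_sub,
      map_one, matPolyEquiv_map_smul, matPolyEquiv_map_C, map_X, sub_mul, one_mul, mul_assoc]
  induction k with
  | zero => simpa [Algebra.algebraMap_eq_smul_one] using congr(coeff $hB 0)
  | succ k ih =>
    have hk : B.coeff (k + 1) = A.charpolyRev.coeff (k + 1) • 1 + A * B.coeff k := by
      rw [← sub_eq_iff_eq_add]
      simpa [Algebra.algebraMap_eq_smul_one] using congr(coeff $hB (k + 1))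
    simp [hk, ih, Nat.sum_antidiagonal_succ', mul_sum, pow_succ']

theorem mul_coeff_charpolyRev_eq_sum (A : Matrix n n R) (k : ℕ) :
    (k + 1) * A.charpolyRev.coeff (k + 1) =
      -∑ p ∈ antidiagonal k, A.charpolyRev.coeff p.1 * (A ^ (p.2 + 1)).trace := by
  have hderiv : (1 - (X : R[X]) • A.map C).map derivative = -A.map C := by
    ext i j
    by_cases h : i = j <;> simp [h]
  let B := matPolyEquiv (1 - (X : R[X]) • A.map C).adjugate
  calc (k + 1) * A.charpolyRev.coeff (k + 1)
      = (derivative A.charpolyRev).coeff k := by rw [coeff_derivative, mul_comm]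
    _ = -(B.coeff k * A).trace := by
      rw [Matrix.charpolyRev, derivative_det_eq_trace_adjugate_mul, hderiv]
      simp [B, Matrix.trace, Matrix.mul_apply, finsetSum_coeff, matPolyEquiv_coeff_apply]
    _ = _ := by
      rw [coeff_matPolyEquiv_adjugate_one_sub_X_smul, sum_mul, Matrix.trace_sum]
      simp [pow_succ]

theorem coeff_charpolyRev_eq_sum_minors (A : Matrix n n R) (k : ℕ) :
    A.charpolyRev.coeff k =
      (-1) ^ k * ∑ s ∈ univ.powersetCard k,
        (A.submatrix (Subtype.val : s → n) (Subtype.val : s → n)).det := by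
  have h : A.charpolyRev = (1 + (X : R[X]) • (-A).map C).det := by
    rw [Matrix.charpolyRev, Matrix.map_neg C (map_neg C) A, smul_neg, sub_eq_add_neg]
  rw [h, Matrix.coeff_det_one_add_X_smul_eq_sum_minors, mul_sum]
  refine sum_congr rfl fun s hs ↦ ?_
  rw [Matrix.submatrix_neg, Pi.neg_apply, Pi.neg_apply, Matrix.det_neg, Fintype.card_coe,
    (mem_powersetCard.mp hs).2]

end NewtonIdentity

section Trace

variable {R M ι : Type*} [CommRing R] [AddCommGroup M] [Module R M]

theorem toMatrix_exteriorPower_map_apply_self [Fintype ι] [LinearOrder ι] (b : Module.Basis ι R M)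
    (f : M →ₗ[R] M) (k : ℕ) (s : Set.powersetCard ι k) :
    LinearMap.toMatrix (b.exteriorPower k) (b.exteriorPower k) (exteriorPower.map k f) s s =
      ((LinearMap.toMatrix b b f).submatrix
        (Subtype.val : s.1 → ι) (Subtype.val : s.1 → ι)).det := by
  rw [LinearMap.toMatrix_apply, exteriorPower.basis_repr_apply, exteriorPower.basis_apply,
    exteriorPower.map_apply_ιMulti_family, exteriorPower.ιMulti_family,
    exteriorPower.ιMultiDual_apply_ιMulti, ← Matrix.det_transpose,
    ← Matrix.det_submatrix_equiv_self (Set.powersetCard.orderIsoOfFin s).toEquiv]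
  congr 1
  ext i j
  exact (LinearMap.toMatrix_apply b b f _ _).symm

theorem trace_exteriorPower_map [Fintype ι] [LinearOrder ι] (b : Module.Basis ι R M)
    (f : M →ₗ[R] M) (k : ℕ) :
    LinearMap.trace R (⋀[R]^k M) (exteriorPower.map k f) =
      ∑ s ∈ univ.powersetCard k,
        ((LinearMap.toMatrix b b f).submatrix (Subtype.val : s → ι) (Subtype.val : s → ι)).det := by
  rw [LinearMap.trace_eq_matrix_trace R (b.exteriorPower k),
    sum_subtype (p := (· ∈ Set.powersetCard ι k)) _ (by simp [Set.powersetCard.mem_iff])]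
  exact sum_congr rfl fun s _ ↦ toMatrix_exteriorPower_map_apply_self b f k s

theorem mul_trace_exteriorPower_map_eq_sum [Module.Free R M] [Module.Finite R M]
    (f : M →ₗ[R] M) (k : ℕ) :
    (-1) ^ k * (k + 1) * LinearMap.trace R _ (exteriorPower.map (k + 1) f) =
      ∑ p ∈ antidiagonal k, (-1) ^ p.1 * LinearMap.trace R _ (exteriorPower.map p.1 f) *
        LinearMap.trace R M (f ^ (p.2 + 1)) := by
  nontriviality R
  let b := Module.finBasis R M
  have h := mul_coeff_charpolyRev_eq_sum (LinearMap.toMatrix b b f) k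
  simp only [coeff_charpolyRev_eq_sum_minors, ← trace_exteriorPower_map b] at h
  simp only [LinearMap.trace_eq_matrix_trace R b, ← LinearMap.toMatrix_pow]
  linear_combination -h

theorem trace_eq_trace_restrict_add_trace_mapQ (N : Submodule R M) [Module.Free R N]
    [Module.Finite R N] [Module.Free R (M ⧸ N)] [Module.Finite R (M ⧸ N)]
    (f : M →ₗ[R] M) (hf : N ≤ N.comap f) :
    LinearMap.trace R M f =
      LinearMap.trace R N (f.restrict hf) + LinearMap.trace R (M ⧸ N) (N.mapQ N f hf) := by
  let bN := Module.Free.chooseBasis R N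
  let bQ := Module.Free.chooseBasis R (M ⧸ N)
  rw [LinearMap.trace_eq_matrix_trace R (bN.sumQuot bQ), LinearMap.trace_eq_matrix_trace R bN,
    LinearMap.trace_eq_matrix_trace R bQ]
  simp only [Matrix.trace, Matrix.diag_apply, Fintype.sum_sum_type, LinearMap.toMatrix_apply]
  congr 1
  · refine sum_congr rfl fun i _ ↦ ?_
    rw [Module.Basis.sumQuot_inl]
    exact Module.Basis.sumQuot_repr_inl_of_mem ..
  · refine sum_congr rfl fun i _ ↦ ?_
    rw [Module.Basis.sumQuot_repr_inr, Submodule.mkQ_apply, ← Submodule.mapQ_apply,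
      Module.Basis.sumQuot_inr]

end Trace

section Representation

variable {R G V : Type*} [CommRing R] [Monoid G] [AddCommGroup V] [Module R V]
  (ρ : Representation R G V)

/-- The exterior power `⋀ⁿ V` of a representation `V`, with `G` acting diagonally on
`v₁ ∧ ⋯ ∧ vₙ`. -/
noncomputable def exteriorPowerRep (n : ℕ) : Representation R G (⋀[R]^n V) where
  toFun g := exteriorPower.map n (ρ g)
  map_one' := by rw [map_one]; exact exteriorPower.map_id
  map_mul' g h := by rw [map_mul]; exact exteriorPower.map_comp _ _

theorem ker_sub_one_le_comap {u g : G} (hug : Commute u g) :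
    LinearMap.ker (ρ u - 1) ≤ (LinearMap.ker (ρ u - 1)).comap (ρ g) := by
  intro v hv
  have hcomm : Commute (ρ u - 1) (ρ g) := (hug.map ρ).sub_left (Commute.one_left _)
  have hswap : (ρ u - 1) (ρ g v) = ρ g ((ρ u - 1) v) := congr($hcomm.eq v)
  rw [Submodule.mem_comap, LinearMap.mem_ker, hswap, LinearMap.mem_ker.mp hv, map_zero]

end Representation

section Character

variable {K G V : Type*} [Field K] [Monoid G] [AddCommGroup V] [Module K V]
  [FiniteDimensional K V] (ρ : Representation K G V)

theorem mul_character_exteriorPowerRep_eq_sum (k : ℕ) :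
    (-1) ^ k * (k + 1) * (exteriorPowerRep ρ (k + 1)).character =
      ∑ p ∈ antidiagonal k, (-1) ^ p.1 * (exteriorPowerRep ρ p.1).character *
        fun g ↦ ρ.character (g ^ (p.2 + 1)) := by
  ext g
  simpa [Representation.character] using! mul_trace_exteriorPower_map_eq_sum (ρ g) k

theorem character_exteriorPowerRep_zero : (exteriorPowerRep ρ 0).character = 1 := by
  ext g
  simpa [powersetCard_zero] using! trace_exteriorPower_map (Module.finBasis K V) (ρ g) 0

theorem character_mul_eq_sub_of_sq_eq_one {u : G} (hu2 : u ^ 2 = 1)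
    (hN : ∀ g, LinearMap.ker (ρ u - 1) ≤ (LinearMap.ker (ρ u - 1)).comap (ρ g)) (g : G) :
    ρ.character (u * g) = (ρ.subrepresentation _ hN).character g -
      (ρ.quotient _ hN).character g := by
  have hsub : ρ.subrepresentation _ hN (u * g) = ρ.subrepresentation _ hN g := by
    ext v
    simpa [sub_eq_zero] using hN g v.2
  have hquot : ρ.quotient _ hN (u * g) = -ρ.quotient _ hN g := by
    refine Submodule.linearMap_qext _ (LinearMap.ext fun v ↦ ?_)
    -- The difference of representatives is `ρ u (ρ g v) + ρ g v`, which `ρ u` fixes.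
    refine (Submodule.Quotient.eq _).mpr ?_
    have hsq (w : V) : ρ u (ρ u w) = w := by
      simpa [pow_two, hu2] using congr($(map_pow ρ u 2) w).symm
    simp [hsq, add_comm]
  calc ρ.character (u * g)
      = (ρ.subrepresentation _ hN).character (u * g) + (ρ.quotient _ hN).character (u * g) :=
        trace_eq_trace_restrict_add_trace_mapQ _ (ρ (u * g)) (hN _)
    _ = _ := by
      simp only [Representation.character, hsub, hquot, map_neg, sub_eq_add_neg]

end Character

universe u v

section VirtualCharacter

variable {K : Type u} [Field K] {G : Type v} [Monoid G]

theorem character_of_prod (V W : FDRep K G) :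
    (FDRep.of (Representation.prod V.ρ W.ρ)).character = V.character + W.character :=
  funext fun g ↦ LinearMap.trace_prodMap' (V.ρ g) (W.ρ g)

theorem character_of_trivial (V : Type u) [AddCommGroup V] [Module K V] [FiniteDimensional K V] :
    (FDRep.of (Representation.trivial K G V)).character = (Module.finrank K V : G → K) :=
  funext fun _ ↦ LinearMap.trace_one K V

theorem character_of_trivial_punit :
    (FDRep.of (Representation.trivial K G PUnit.{u + 1})).character = 0 := by
  rw [character_of_trivial, Module.finrank_zero_of_subsingleton, Nat.cast_zero]

variable (K G) in
/-- The ring of virtual characters of `G` over `K`, as functions on `G`: differences of characters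
of finite-dimensional representations. -/
def virtualCharacters : Subring (G → K) where
  carrier := {χ | ∃ V W : FDRep K G, χ = V.character - W.character}
  zero_mem' := ⟨FDRep.of (Representation.trivial K G K), _, (sub_self _).symm⟩
  one_mem' := ⟨FDRep.of (Representation.trivial K G K),
      FDRep.of (Representation.trivial K G PUnit.{u + 1}), by
        rw [character_of_trivial_punit]
        simp [character_of_trivial]⟩
  add_mem' := by
    rintro _ _ ⟨V, W, rfl⟩ ⟨V', W', rfl⟩
    refine ⟨FDRep.of (Representation.prod V.ρ V'.ρ), FDRep.of (Representation.prod W.ρ W'.ρ), ?_⟩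
    rw [character_of_prod, character_of_prod, add_sub_add_comm]
  neg_mem' := by
    rintro _ ⟨V, W, rfl⟩
    exact ⟨W, V, neg_sub _ _⟩
  mul_mem' := by
    rintro _ _ ⟨V, W, rfl⟩ ⟨V', W', rfl⟩
    refine ⟨FDRep.of (Representation.prod (V ⊗ V').ρ (W ⊗ W').ρ),
      FDRep.of (Representation.prod (V ⊗ W').ρ (W ⊗ V').ρ), ?_⟩
    simp only [character_of_prod, FDRep.char_tensor]
    ring

namespace virtualCharacters

theorem mem_iff {χ : G → K} :
    χ ∈ virtualCharacters K G ↔ ∃ V W : FDRep K G, χ = V.character - W.character :=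
  Iff.rfl

variable {V : Type u} [AddCommGroup V] [Module K V] [FiniteDimensional K V]
  (ρ : Representation K G V)

theorem character_mem : ρ.character ∈ virtualCharacters K G :=
  mem_iff.mpr ⟨FDRep.of ρ, FDRep.of (Representation.trivial K G PUnit.{u + 1}), by
    rw [character_of_trivial_punit, sub_zero]
    rfl⟩

theorem character_pow_mem (k : ℕ) :
    (fun g ↦ ρ.character (g ^ k)) ∈ virtualCharacters K G := by
  induction k using Nat.strong_induction_on with
  | _ k ih =>
    obtain _ | k := k
    · simp only [pow_zero, Representation.char_one]
      exact natCast_mem _ (Module.finrank K V)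
    have hsign (i : ℕ) : (-1) ^ i ∈ virtualCharacters K G := pow_mem (neg_mem (one_mem _)) i
    have hΛ (i : ℕ) := mul_mem (hsign i) (character_mem (exteriorPowerRep ρ i))
    have hnewton := mul_character_exteriorPowerRep_eq_sum ρ k
    have hlead : (0, k) ∈ antidiagonal k := HasAntidiagonal.mem_antidiagonal.mpr (zero_add k)
    rw [← add_sum_erase _ _ hlead, pow_zero, one_mul, character_exteriorPowerRep_zero, one_mul,
      ← sub_eq_iff_eq_add] at hnewton
    rw [← hnewton]
    refine sub_mem ?_ (sum_mem fun p hp ↦ mul_mem (hΛ p.1) (ih _ ?_))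
    · have hsucc : (k + 1 : G → K) ∈ virtualCharacters K G := add_mem (natCast_mem _ k) (one_mem _)
      exact mul_mem (mul_mem (hsign k) hsucc) (character_mem _)
    · have := HasAntidiagonal.mem_antidiagonal.mp (mem_of_mem_erase hp)
      grind

theorem comp_mul_left_mem {u : G} (hu : ∀ g, Commute u g) (hu2 : u ^ 2 = 1) {f : G → K}
    (hf : f ∈ virtualCharacters K G) : (fun g ↦ f (u * g)) ∈ virtualCharacters K G := by
  have hchar (V : FDRep K G) : (fun g ↦ V.character (u * g)) ∈ virtualCharacters K G := by
    have hN g := ker_sub_one_le_comap V.ρ (hu g)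
    have hsplit : (fun g ↦ V.character (u * g)) =
        (Representation.subrepresentation V.ρ _ hN).character -
          (Representation.quotient V.ρ _ hN).character :=
      funext <| character_mul_eq_sub_of_sq_eq_one V.ρ hu2 hN
    exact hsplit ▸ sub_mem (character_mem _) (character_mem _)
  obtain ⟨V, W, rfl⟩ := mem_iff.mp hf
  exact sub_mem (hchar V) (hchar W)

theorem comp_pow_mem {f : G → K} (hf : f ∈ virtualCharacters K G) (k : ℕ) :
    (fun g ↦ f (g ^ k)) ∈ virtualCharacters K G := by
  obtain ⟨V, W, rfl⟩ := mem_iff.mp hf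
  exact sub_mem (character_pow_mem V.ρ k) (character_pow_mem W.ρ k)

end virtualCharacters

theorem adams_operation_virtual_character_general (u : G) (hu : ∀ g : G, u * g = g * u)
    (hu2 : u ^ 2 = 1) {χ : G → K} (hχ : χ ∈ virtualCharacters K G) (k : ℕ) :
    (fun g ↦ χ (u ^ (k + 1) * g ^ k)) ∈ virtualCharacters K G := by
  have hcomm (g : G) : Commute (u ^ (k + 1)) g := Commute.pow_left (hu g) (k + 1)
  have hsq : (u ^ (k + 1)) ^ 2 = 1 := by rw [pow_right_comm, hu2, one_pow]
  exact virtualCharacters.comp_pow_mem (virtualCharacters.comp_mul_left_mem hcomm hsq hχ) k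

end VirtualCharacter

/-- For a finite group `G` and a central element `u ∈ G` with `u² = 1`, the twisted Adams
operation `ψᵏ_u(χ)(g) = χ(u^{k+1} g^k)` sends virtual characters of `G` over `ℂ` to
virtual characters. -/
theorem adams_operation_virtual_character {G : Type} [Group G] [Finite G]
    (u : G) (hu : ∀ g : G, u * g = g * u) (hu2 : u ^ 2 = 1)
    (V W : FDRep ℂ G) (k : ℕ) (hk : 1 ≤ k) :
    ∃ V' W' : FDRep ℂ G, ∀ g : G,
      V.character (u ^ (k + 1) * g ^ k) - W.character (u ^ (k + 1) * g ^ k) =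
        V'.character g - W'.character g := by
  obtain ⟨V', W', h⟩ := adams_operation_virtual_character_general u hu hu2
    (virtualCharacters.mem_iff.mpr ⟨V, W, rfl⟩) k
  exact ⟨V', W', congrFun h⟩
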